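/- Cut-off property: assume ρ ∈ V₀ is regular dominant. If η ∈ Λ₁ and λ ∈ Λ₊ are such that λ − η ∉ Λ₊, then f_η(ρ+λ) = 0 (the value is defined since α(ρ+λ) ≠ 0 for all α ∈ Δ, and it vanishes). -/

import Mathlib

/-
Common framework for F. Knop, "Construction of Commuting Difference Operators
for Multiplicity Free Spaces".

We identify `Γ` with `ι → ℤ` via its basis `Σ` (so `Σ` is the standard basis),
`Γ^∨` with `ι → ℤ` via the dual basis `Σ^∨`, and `V = Hom(Γ, ℂ)` with `ι → ℂ`.
-/

open scoped BigOperators Classical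
open MvPolynomial

noncomputable section

namespace Knop

variable {ι : Type*} [Fintype ι] [DecidableEq ι]

/-- The `i`-th element of the basis `Σ` of `Γ` (resp. of `Σ^∨ ⊆ Γ^∨`), in coordinates. -/
def e (i : ι) : ι → ℤ := Pi.single i 1

/-- The pairing between `Γ` and `Γ^∨` (in coordinates, the dot product);
`pairZ γ η = γ(η) = η(γ)`. -/
def pairZ (γ η : ι → ℤ) : ℤ := ∑ i, γ i * η i

/-- Evaluation of `γ ∈ Γ` as a linear function on `V = Hom(Γ,ℂ) ≅ ι → ℂ`. -/
def evalC (γ : ι → ℤ) (z : ι → ℂ) : ℂ := ∑ i, (γ i : ℂ) * z i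

/-- The embedding `Γ^∨ ⊆ V`. -/
def toV (η : ι → ℤ) : ι → ℂ := fun i => (η i : ℂ)

/-- The action of `w ∈ Aut(Γ)` on `V = Hom(Γ, ℂ)`: `(w • z)(γ) = z(w⁻¹ γ)`, in coordinates. -/
def actV (w : (ι → ℤ) ≃ₗ[ℤ] (ι → ℤ)) (z : ι → ℂ) : ι → ℂ :=
  fun i => evalC (w.symm (e i)) z

/-- The action of `w ∈ Aut(Γ)` on `Γ^∨ = Hom(Γ, ℤ)`: `(w • η)(γ) = η(w⁻¹ γ)`. -/
def actDual (w : (ι → ℤ) ≃ₗ[ℤ] (ι → ℤ)) (η : ι → ℤ) : ι → ℤ :=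
  fun i => pairZ (w.symm (e i)) η

/-- `Λ₊`, the `ℕ`-span of `Σ^∨` inside `Γ^∨`. -/
def LamPlus : Set (ι → ℤ) := {η | ∀ i, 0 ≤ η i}

/-- The reflection `s_α(x) = x - α^∨(x)·α` attached to a root `α` with coroot `αv`. -/
def reflMap (α αv : ι → ℤ) : (ι → ℤ) → (ι → ℤ) := fun x => x - pairZ x αv • α

/-- The data `(Γ, Σ, W, ℓ)` together with the axioms C1–C8 of Knop's paper
(in the coordinates given by `Σ`).  The root system `Δ` of `W`, the set
`Φ = W·Σ`, and `Λ₁ = W·Σ^∨₁` are carried along as `Finset`s with their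
defining specifications. -/
structure Data (ι : Type*) [Fintype ι] [DecidableEq ι] where
  /-- the reflection group `W ⊆ Aut(Γ)` -/
  W : Subgroup ((ι → ℤ) ≃ₗ[ℤ] (ι → ℤ))
  /-- `W` is finite -/
  W_finite : (W : Set ((ι → ℤ) ≃ₗ[ℤ] (ι → ℤ))).Finite
  /-- the element `ℓ ∈ Γ` -/
  ell : ι → ℤ
  /-- the set of roots `Δ ⊆ Γ` of `W` -/
  Δ : Finset (ι → ℤ)
  /-- the coroot `α^∨ ∈ Γ^∨` of a root `α` -/
  coroot : (ι → ℤ) → (ι → ℤ)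
  /-- `Φ = W·Σ` -/
  Φ : Finset (ι → ℤ)
  /-- `Λ₁ = W·Σ^∨₁` -/
  Λ₁ : Finset (ι → ℤ)
  Φ_spec : ∀ ω, ω ∈ Φ ↔ ∃ w ∈ W, ∃ i, ω = w (e i)
  Λ₁_spec : ∀ η, η ∈ Λ₁ ↔ ∃ w ∈ W, ∃ i, ell i = 1 ∧ η = actDual w (e i)
  /-- `Δ = -Δ` -/
  Δ_neg : ∀ α ∈ Δ, -α ∈ Δ
  /-- every root is a primitive vector of `Γ` -/
  Δ_prim : ∀ α ∈ Δ, ∀ (n : ℤ) (β : ι → ℤ), α = n • β → IsUnit n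
  /-- the reflection `s_α` belongs to `W` -/
  refl_mem : ∀ α ∈ Δ, ∃ w ∈ W, ∀ x, w x = reflMap α (coroot α) x
  /-- `α^∨(α) = 2` -/
  coroot_pair : ∀ α ∈ Δ, pairZ α (coroot α) = 2
  /-- C1: `W` is generated by the reflections `s_α`, `α ∈ Δ` -/
  C1 : W ≤ Subgroup.closure {w : (ι → ℤ) ≃ₗ[ℤ] (ι → ℤ) |
        ∃ α ∈ Δ, ∀ x, w x = reflMap α (coroot α) x}
  /-- C2: `Δ = Δ⁺ ∪ (-Δ⁺)` -/
  C2 : ∀ α ∈ Δ, (∀ i, 0 ≤ α i) ∨ (∀ i, α i ≤ 0)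
  /-- C3: `Φ ⊆ Φ⁺ ∪ (-Φ⁺)` -/
  C3 : ∀ ω ∈ Φ, (∀ i, 0 ≤ ω i) ∨ (∀ i, ω i ≤ 0)
  /-- C4: `ℓ ∈ Γ^W` -/
  C4 : ∀ w ∈ W, w ell = ell
  /-- C5: `Σ_{ω ∈ Φ⁺} ω - Σ_{α ∈ Δ⁺} α = ℓ` -/
  C5 : (∑ ω ∈ Φ.filter (fun ω => ∀ i, 0 ≤ ω i), ω)
        - (∑ α ∈ Δ.filter (fun α => ∀ i, 0 ≤ α i), α) = ell
  /-- C6: `ℓ(η) > 0` for all `η ∈ Σ^∨` -/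
  C6 : ∀ i, 0 < ell i
  /-- C7: `ω(η) ∈ {-1,0,1}` for `η ∈ Σ^∨₁` and `ω ∈ Δ ∪ Φ` -/
  C7 : ∀ i, ell i = 1 → ∀ ω, (ω ∈ Δ ∨ ω ∈ Φ) → ω i = -1 ∨ ω i = 0 ∨ ω i = 1
  /-- C8: a `W`-invariant linear function on `V` is determined by its restriction to `Σ^∨₁` -/
  C8 : ∀ c c' : ι → ℂ,
    (∀ w ∈ W, ∀ z : ι → ℂ, ∑ i, c i * actV w z i = ∑ i, c i * z i) →
    (∀ w ∈ W, ∀ z : ι → ℂ, ∑ i, c' i * actV w z i = ∑ i, c' i * z i) →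
    (∀ i, ell i = 1 → c i = c' i) → c = c'

namespace Data

variable (D : Data ι)

/-- `Δ⁺`, the positive roots. -/
def Δpos : Finset (ι → ℤ) := D.Δ.filter fun α => ∀ i, 0 ≤ α i

/-- `Φ⁺`. -/
def Φpos : Finset (ι → ℤ) := D.Φ.filter fun ω => ∀ i, 0 ≤ ω i

/-- The submonoid `Λ` of `Γ^∨` generated by `Λ₁`. -/
def Lam : AddSubmonoid (ι → ℤ) := AddSubmonoid.closure (D.Λ₁ : Set (ι → ℤ))

/-- `ρ ∈ V₀`: `ω₁(ρ) = ω₂(ρ)` whenever `ω₁, ω₂ ∈ Σ` lie in the same `±W`-orbit. -/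
def InV0 (ρ : ι → ℂ) : Prop :=
  ∀ i j : ι, (∃ w ∈ D.W, e i = w (e j) ∨ e i = -(w (e j))) → ρ i = ρ j

/-- `k` is the multiplicity-parameter function of `ρ ∈ V₀`:
`k_ω = ω₁(ρ)` for any `ω₁ ∈ (±W)·ω ∩ Σ`. -/
def IsK (ρ : ι → ℂ) (k : (ι → ℤ) → ℂ) : Prop :=
  ∀ (ω : ι → ℤ) (i : ι), (∃ w ∈ D.W, e i = w ω ∨ e i = -(w ω)) → k ω = ρ i

/-- `ρ` is dominant: `α(ρ) ∉ {-1,-2,…}` for all `α ∈ Δ⁺`. -/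
def Dominant (ρ : ι → ℂ) : Prop :=
  ∀ α ∈ D.Δpos, ∀ n : ℕ, evalC α ρ ≠ -((n : ℂ) + 1)

/-- `ρ` is regular: `α(ρ) ≠ 0` for all `α ∈ Δ⁺`. -/
def Regular (ρ : ι → ℂ) : Prop :=
  ∀ α ∈ D.Δpos, evalC α ρ ≠ 0

/-- `ρ` is non-integral: `α(ρ) ∉ ℤ` for all `α ∈ Δ`. -/
def NonIntegral (ρ : ι → ℂ) : Prop :=
  ∀ α ∈ D.Δ, ∀ n : ℤ, evalC α ρ ≠ (n : ℂ)

/-- `ρ` is strongly dominant (`k` being the parameter function of `ρ`). -/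
def StronglyDominant (ρ : ι → ℂ) (k : (ι → ℤ) → ℂ) : Prop :=
  D.Regular ρ ∧ D.Dominant ρ ∧
    ∀ ω ∈ D.Φpos, (∀ n : ℕ, evalC ω ρ - k ω ≠ -((n : ℂ) + 1)) ∧
      (∀ n : ℕ, evalC ω ρ + k ω ≠ -(n : ℂ))

/-- The rational function `f_η`, `η ∈ Λ₁`. -/
def f (k : (ι → ℤ) → ℂ) (η : ι → ℤ) (z : ι → ℂ) : ℂ :=
  (∏ ω ∈ D.Φ.filter (fun ω => 0 < pairZ ω η), (evalC ω z - k ω)) /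
  (∏ α ∈ D.Δ.filter (fun α => 0 < pairZ α η), evalC α z)

/-- The value at `z` of `L(p) = Σ_{η ∈ Λ₁} f_η T_η (p)`. -/
def Lval (k : (ι → ℤ) → ℂ) (p : MvPolynomial ι ℂ) (z : ι → ℂ) : ℂ :=
  ∑ η ∈ D.Λ₁, D.f k η z * eval (z - toV η) p

/-- `W`-invariance of a polynomial function on `V`. -/
def WInv (p : MvPolynomial ι ℂ) : Prop :=
  ∀ w ∈ D.W, ∀ z : ι → ℂ, eval (actV w z) p = eval z p

/-- The defining property of the Capelli polynomial `p_λ` (with shift `ρ`):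
`p` is `W`-invariant of degree `≤ ℓ(λ)` and `p(ρ+μ) = δ_{λμ}` for all
`μ ∈ Λ₊` with `ℓ(μ) ≤ ℓ(λ)`. -/
def CapelliAt (ρ : ι → ℂ) (lam : ι → ℤ) (p : MvPolynomial ι ℂ) : Prop :=
  D.WInv p ∧ (p.totalDegree : ℤ) ≤ pairZ D.ell lam ∧
    ∀ μ : ι → ℤ, μ ∈ LamPlus → pairZ D.ell μ ≤ pairZ D.ell lam →
      eval (ρ + toV μ) p = if μ = lam then 1 else 0

/-- Axiom C0: for some regular dominant `ρ' ∈ V₀` and every `λ ∈ Λ₊` there is a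
unique `W`-invariant polynomial of degree `ℓ(λ)` with `p(ρ'+μ) = δ_{λμ}` for all
`μ ∈ Λ₊` with `ℓ(μ) ≤ ℓ(λ)`. -/
def C0 : Prop :=
  ∃ ρ' : ι → ℂ, D.InV0 ρ' ∧ D.Regular ρ' ∧ D.Dominant ρ' ∧
    ∀ lam : ι → ℤ, lam ∈ LamPlus →
      ∃! p : MvPolynomial ι ℂ, D.WInv p ∧
        p.totalDegree = (pairZ D.ell lam).toNat ∧
        ∀ μ : ι → ℤ, μ ∈ LamPlus → pairZ D.ell μ ≤ pairZ D.ell lam →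
          eval (ρ' + toV μ) p = if μ = lam then 1 else 0

end Data

/-- The `m`-th point `τ_m` of the path starting at `lam` with step sequence `s`
(steps are meant to lie in `Λ₁`). -/
def pathPt (lam : ι → ℤ) {d : ℕ} (s : Fin d → ι → ℤ) (m : ℕ) : ι → ℤ :=
  lam + ∑ i ∈ Finset.univ.filter (fun i : Fin d => (i : ℕ) < m), s i

/-- All paths of length `d` from `lam` to `mu` (with steps in `Λ₁`), encoded by
their step sequences. -/
def paths (D : Data ι) (lam mu : ι → ℤ) (d : ℕ) : Finset (Fin d → ι → ℤ) :=
  (Fintype.piFinset fun _ : Fin d => D.Λ₁).filter fun s => pathPt lam s d = mu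

/-- All positive paths of length `d` from `lam` to `mu`. -/
def posPaths (D : Data ι) (lam mu : ι → ℤ) (d : ℕ) : Finset (Fin d → ι → ℤ) :=
  (Fintype.piFinset fun _ : Fin d => D.Λ₁).filter fun s =>
    (∀ m ≤ d, pathPt lam s m ∈ LamPlus) ∧ pathPt lam s d = mu

/-- The falling factorial `[x ↓ d] = x(x-1)⋯(x-d+1)`. -/
def ffall (x : ℂ) (d : ℤ) : ℂ := ∏ j ∈ Finset.range d.toNat, (x - (j : ℂ))

namespace Data

variable (D : Data ι)

/-- The generalized rational function `f_τ`, `τ ∈ Λ` (formula (Def-f-l)). -/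
def fgen (k : (ι → ℤ) → ℂ) (τ : ι → ℤ) (z : ι → ℂ) : ℂ :=
  (∏ ω ∈ D.Φ.filter (fun ω => 0 < pairZ ω τ), ffall (evalC ω z - k ω) (pairZ ω τ)) /
  (∏ α ∈ D.Δ.filter (fun α => 0 < pairZ α τ), ffall (evalC α z) (pairZ α τ))

/-- The virtual dimension `d_λ = (-1)^{ℓ(λ)} f_λ(-ρ) / f_λ(ρ+λ)`. -/
def vdim (k : (ι → ℤ) → ℂ) (ρ : ι → ℂ) (lam : ι → ℤ) : ℂ :=
  (-1 : ℂ) ^ (pairZ D.ell lam) * D.fgen k lam (-ρ) / D.fgen k lam (ρ + toV lam)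

/-- The rational function `b_τ^h` (formula (Def-b-t)); here the sum runs over
all paths from `0` to `τ` of length `d = ℓ(τ)`. -/
def bfun (k : (ι → ℤ) → ℂ) (h : MvPolynomial ι ℂ) (τ : ι → ℤ) (z : ι → ℂ) : ℂ :=
  ∑ s ∈ paths D 0 τ (pairZ D.ell τ).toNat,
    (∑ i ∈ Finset.range ((pairZ D.ell τ).toNat + 1),
      ((-1 : ℂ) ^ ((pairZ D.ell τ).toNat - i) /
        ((Nat.factorial i : ℂ) * (Nat.factorial ((pairZ D.ell τ).toNat - i) : ℂ))) *
        eval (z - toV (pathPt 0 s i)) h) *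
    ∏ i : Fin (pairZ D.ell τ).toNat, D.fgen k (s i) (z - toV (pathPt 0 s (i : ℕ)))

/-- The difference operator `D_h = Σ_{τ ∈ Λ} b_τ^h T_τ`, acting on functions on `V`. -/
def Dop (k : (ι → ℤ) → ℂ) (h : MvPolynomial ι ℂ) (F : (ι → ℂ) → ℂ) (z : ι → ℂ) : ℂ :=
  ∑ᶠ τ ∈ (D.Lam : Set (ι → ℤ)), D.bfun k h τ z * F (z - toV τ)

/-- The order relation on `Λ`: `τ₁ ≤ τ₂` iff `ℓ(τ₁) < ℓ(τ₂)`, or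
`ℓ(τ₁) = ℓ(τ₂)` and `τ₂ - τ₁` is a sum of positive coroots. -/
def ordLe (τ₁ τ₂ : ι → ℤ) : Prop :=
  pairZ D.ell τ₁ < pairZ D.ell τ₂ ∨
    (pairZ D.ell τ₁ = pairZ D.ell τ₂ ∧
      τ₂ - τ₁ ∈ AddSubmonoid.closure (D.coroot '' (D.Δpos : Set (ι → ℤ))))

end Data

/-!
If `λ - η ∉ Λ₊`, some coordinate has `λ_i < η_i`. Since `η` lies in the `W`-orbit of `Σ^∨₁` and
`Φ` is `W`-stable, C7 bounds `η_i = e_i(η)` by `1`, which forces `λ_i = 0` and `η_i = 1`. Hence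
`ω = e_i` contributes to the numerator of `f_η(ρ + λ)` the factor `ρ_i + λ_i - k_ω = 0`.
The denominator does not vanish: `α(λ) ∈ ℕ` for a positive root `α`, and regularity with dominance
say exactly that `α(ρ)` is not the negative of a natural number.
-/

theorem sub_notMem_LamPlus_iff {κ : Type*} {lam η : κ → ℤ} :
    lam - η ∉ LamPlus ↔ ∃ i, lam i < η i := by
  simp [LamPlus]

theorem pairZ_e_left (i : ι) (η : ι → ℤ) : pairZ (e i) η = η i :=
  single_one_dotProduct i η

theorem pairZ_e_right (γ : ι → ℤ) (i : ι) : pairZ γ (e i) = γ i :=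
  dotProduct_single_one γ i

theorem pairZ_actDual (w : (ι → ℤ) ≃ₗ[ℤ] (ι → ℤ)) (γ η : ι → ℤ) :
    pairZ γ (actDual w η) = pairZ (w.symm γ) η := by
  have hγ : w.symm γ = ∑ i, γ i • w.symm (e i) := by
    conv_lhs => rw [pi_eq_sum_univ' γ]
    simp only [map_sum, map_smul, e]
  calc pairZ γ (actDual w η) = ∑ i, γ i • (w.symm (e i) ⬝ᵥ η) := rfl
    _ = (∑ i, γ i • w.symm (e i)) ⬝ᵥ η := by simp only [sum_dotProduct, smul_dotProduct]
    _ = pairZ (w.symm γ) η := by rw [hγ]; rfl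

omit [DecidableEq ι] in
theorem pairZ_nonneg {γ η : ι → ℤ} (hγ : ∀ i, 0 ≤ γ i) (hη : η ∈ LamPlus) : 0 ≤ pairZ γ η :=
  dotProduct_nonneg_of_nonneg hγ hη

theorem evalC_e (i : ι) (z : ι → ℂ) : evalC (e i) z = z i := by
  simp [evalC, e, Pi.single_apply]

omit [DecidableEq ι] in
theorem evalC_neg (γ : ι → ℤ) (z : ι → ℂ) : evalC (-γ) z = -evalC γ z := by
  simp [evalC]

omit [DecidableEq ι] in
theorem evalC_add_toV (γ : ι → ℤ) (z : ι → ℂ) (η : ι → ℤ) :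
    evalC γ (z + toV η) = evalC γ z + (pairZ γ η : ℂ) := by
  simp [evalC, pairZ, toV, mul_add, Finset.sum_add_distrib]

namespace Data

variable {D : Data ι}

theorem e_mem_Φ (i : ι) : e i ∈ D.Φ :=
  (D.Φ_spec _).mpr ⟨1, D.W.one_mem, i, rfl⟩

theorem apply_mem_Φ {w : (ι → ℤ) ≃ₗ[ℤ] (ι → ℤ)} (hw : w ∈ D.W) {ω : ι → ℤ} (hω : ω ∈ D.Φ) :
    w ω ∈ D.Φ := by
  obtain ⟨v, hv, i, rfl⟩ := (D.Φ_spec ω).mp hω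
  exact (D.Φ_spec _).mpr ⟨w * v, D.W.mul_mem hw hv, i, rfl⟩

theorem abs_pairZ_le_one {ω η : ι → ℤ} (hω : ω ∈ D.Φ) (hη : η ∈ D.Λ₁) : |pairZ ω η| ≤ 1 := by
  obtain ⟨w, hw, j, hj, rfl⟩ := (D.Λ₁_spec η).mp hη
  have hwω : w.symm ω ∈ D.Φ := apply_mem_Φ (D.W.inv_mem hw) hω
  rw [pairZ_actDual, pairZ_e_right]
  rcases D.C7 j hj _ (Or.inr hwω) with h | h | h <;> simp [h]

theorem apply_le_one_of_mem_Λ₁ {η : ι → ℤ} (hη : η ∈ D.Λ₁) (i : ι) : η i ≤ 1 :=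
  pairZ_e_left i η ▸ (abs_le.mp (abs_pairZ_le_one (e_mem_Φ i) hη)).2

theorem mem_Δpos_or_neg_mem_Δpos {α : ι → ℤ} (hα : α ∈ D.Δ) : α ∈ D.Δpos ∨ -α ∈ D.Δpos :=
  (D.C2 α hα).imp (fun h => Finset.mem_filter.mpr ⟨hα, h⟩)
    (fun h => Finset.mem_filter.mpr ⟨D.Δ_neg α hα, fun i => neg_nonneg.mpr (h i)⟩)

theorem evalC_ne_neg_natCast {ρ : ι → ℂ} (hreg : D.Regular ρ) (hdom : D.Dominant ρ)
    {α : ι → ℤ} (hα : α ∈ D.Δpos) : ∀ n : ℕ, evalC α ρ ≠ -(n : ℂ)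
  | 0 => by simpa using hreg α hα
  | n + 1 => by simpa only [Nat.cast_succ] using hdom α hα n

theorem evalC_add_toV_ne_zero_of_mem_Δpos {ρ : ι → ℂ} (hreg : D.Regular ρ) (hdom : D.Dominant ρ)
    {lam : ι → ℤ} (hlam : lam ∈ LamPlus) {α : ι → ℤ} (hα : α ∈ D.Δpos) :
    evalC α (ρ + toV lam) ≠ 0 := by
  intro h
  obtain ⟨n, hn⟩ := Int.eq_ofNat_of_zero_le (pairZ_nonneg (Finset.mem_filter.mp hα).2 hlam)
  rw [evalC_add_toV, hn, Int.cast_natCast] at h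
  exact evalC_ne_neg_natCast hreg hdom hα n (eq_neg_of_add_eq_zero_left h)

theorem evalC_add_toV_ne_zero {ρ : ι → ℂ} (hreg : D.Regular ρ) (hdom : D.Dominant ρ)
    {lam : ι → ℤ} (hlam : lam ∈ LamPlus) {α : ι → ℤ} (hα : α ∈ D.Δ) :
    evalC α (ρ + toV lam) ≠ 0 := by
  rcases mem_Δpos_or_neg_mem_Δpos hα with hpos | hneg
  · exact evalC_add_toV_ne_zero_of_mem_Δpos hreg hdom hlam hpos
  · have h := evalC_add_toV_ne_zero_of_mem_Δpos hreg hdom hlam hneg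
    rwa [evalC_neg, neg_ne_zero] at h

theorem IsK.apply_e {ρ : ι → ℂ} {k : (ι → ℤ) → ℂ} (hk : D.IsK ρ k) (i : ι) : k (e i) = ρ i :=
  hk (e i) i ⟨1, D.W.one_mem, Or.inl rfl⟩

theorem f_eq_zero_of_apply_eq {k : (ι → ℤ) → ℂ} {η : ι → ℤ} {z : ι → ℂ} {i : ι}
    (hη : 0 < η i) (hz : z i = k (e i)) : D.f k η z = 0 := by
  have hmem : e i ∈ D.Φ.filter fun ω => 0 < pairZ ω η :=
    Finset.mem_filter.mpr ⟨e_mem_Φ i, (pairZ_e_left i η).symm ▸ hη⟩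
  have hfactor : evalC (e i) z - k (e i) = 0 := by rw [evalC_e, hz, sub_self]
  rw [f, Finset.prod_eq_zero hmem hfactor, zero_div]

end Data

/-- Lemma 2.2, cut-off property: if `ρ ∈ V₀` is regular dominant,
`η ∈ Λ₁` and `λ ∈ Λ₊` with `λ - η ∉ Λ₊`, then `α(ρ+λ) ≠ 0` for all `α ∈ Δ`
(so `f_η(ρ+λ)` is defined) and `f_η(ρ+λ) = 0`. -/
theorem statement1 (D : Data ι) (ρ : ι → ℂ) (hρ : D.InV0 ρ)
    (hreg : D.Regular ρ) (hdom : D.Dominant ρ)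
    (k : (ι → ℤ) → ℂ) (hk : D.IsK ρ k)
    (η : ι → ℤ) (hη : η ∈ D.Λ₁) (lam : ι → ℤ) (hlam : lam ∈ LamPlus)
    (hsub : lam - η ∉ LamPlus) :
    (∀ α ∈ D.Δ, evalC α (ρ + toV lam) ≠ 0) ∧ D.f k η (ρ + toV lam) = 0 := by
  refine ⟨fun α hα => Data.evalC_add_toV_ne_zero hreg hdom hlam hα, ?_⟩
  obtain ⟨i, hi⟩ := sub_notMem_LamPlus_iff.mp hsub
  have hη_le : η i ≤ 1 := Data.apply_le_one_of_mem_Λ₁ hη i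
  have hlam_nonneg : 0 ≤ lam i := hlam i
  have hlam_zero : lam i = 0 := by omega
  have hη_pos : 0 < η i := by omega
  have hz : (ρ + toV lam) i = k (e i) := by simp [toV, hlam_zero, hk.apply_e]
  exact Data.f_eq_zero_of_apply_eq hη_pos hz

end Knop

end
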